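/- Let F be a field, τ : F → F a ring automorphism, k := F^τ its fixed field, and K a subfield of F with τ(K) = K and k ⊆ K. Let A ∈ GL_d(K), U ∈ GL_d(F) with τ(U) = A·U, R = K[U, (det U)⁻¹] ⊆ F the corresponding Picard-Vessiot ring, and L ⊆ F its field of fractions. Let M be an intermediate field, K ⊆ M ⊆ L, which is itself a Picard-Vessiot field over K: M is generated over K by the entries of some V ∈ GL_e(F) satisfying τ(V) = B·V with B ∈ GL_e(K). Then the Picard-Vessiot ring R_M := K[V, (det V)⁻¹] ⊆ F satisfies R_M = M ∩ R. -/

import Mathlib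

set_option synthInstance.maxHeartbeats 400000
set_option maxHeartbeats 1000000

/-!
The Picard-Vessiot ring can be recovered from the Picard-Vessiot field: it consists of those
elements of the field that lie in a finite-dimensional `K`-subspace `W` of `F` with `τ(W) = W`.
The condition on `W` does not refer to the system `τ(Y) = AY`, so applying this to both
`R_M ⊆ M` and `R ⊆ L` gives `R_M = M ∩ R`.

Every element of `R` is a matrix coefficient `tr(cV)` with `c` a matrix over `K` and `V` a
fundamental matrix of some system over `K`, because such coefficients are closed under sums (block
sums of systems) and products (Kronecker products); the coefficients of a fixed `V` form a space
`W` as above. Conversely, given such a `W` inside `L`, the elements `r` with `rW ⊆ R` form a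
`τ`-stable `R`-submodule `I` of `F` containing a nonzero element `tr(cV)` of `R`, and it suffices
to show that `1 ∈ I`. The `F`-span of the matrices `cV` with `tr(cV) ∈ I` is `τ`-stable, hence
spanned by matrices over `k`, one of which has nonzero trace. Multiplying it by `V⁻¹` gives a
combination, with coefficients in `R`, of matrices `c` over `K` with `tr(cV) ∈ I`, so its trace is
a nonzero constant in `I`.
-/

open Matrix
open scoped Kronecker

universe u

section Descent

theorem repr_map_of_fixed {R V ι : Type*} [Semiring R] [AddCommMonoid V] [Module R V]
    {τ : R →+* R} (e : Module.Basis ι R V) (T : V →ₛₗ[τ] V)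
    (he : ∀ i, T (e i) = e i) (x : V) (i : ι) : e.repr (T x) i = τ (e.repr x i) := by
  have hcoord : (e.coord i).comp T = τ.toSemilinearMap.comp (e.coord i) :=
    e.ext fun j ↦ by
      rcases eq_or_ne j i with rfl | hji <;> simp [*]
  exact LinearMap.congr_fun hcoord x

variable {F V ι : Type*} [DivisionRing F] [AddCommGroup V] [Module F V] {τ : F →+* F}

-- Scaled to have some coordinate `1`, the vector `x` is fixed by `T`, since otherwise applying
-- `T - 1` to it gives a nonzero vector of smaller support.
theorem mem_span_fixed_of_support_minimal (e : Module.Basis ι F V) (T : V →ₛₗ[τ] V)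
    (he : ∀ i, T (e i) = e i) {X : Submodule F V} (hX : ∀ x ∈ X, T x ∈ X) {x : V} (hx : x ∈ X)
    (hmin : ∀ y ∈ X, (e.repr y).support ⊂ (e.repr x).support → y = 0) :
    x ∈ Submodule.span F {x | x ∈ X ∧ T x = x} := by
  obtain rfl | hx0 := eq_or_ne x 0
  · exact zero_mem _
  obtain ⟨i, hi⟩ : ∃ i, e.repr x i ≠ 0 := Finsupp.ne_iff.mp (e.repr.map_ne_zero_iff.mpr hx0)
  set y := (e.repr x i)⁻¹ • x with hy
  have hyX : y ∈ X := X.smul_mem _ hx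
  have hsupport : (e.repr (T y - y)).support ⊂ (e.repr x).support := by
    refine (Finset.ssubset_iff_of_subset fun j hj ↦ ?_).mpr
      ⟨i, by simpa using hi, by simp [repr_map_of_fixed e T he, hy, hi]⟩
    contrapose! hj
    simp_all [repr_map_of_fixed e T he]
  have hfixed : T y = y := sub_eq_zero.mp (hmin _ (X.sub_mem (hX y hyX) hyX) hsupport)
  have hxy : x = e.repr x i • y := by simp [hy, hi]
  rw [hxy]
  exact Submodule.smul_mem _ _ (Submodule.subset_span ⟨hyX, hfixed⟩)

theorem le_span_fixed_of_stable (e : Module.Basis ι F V) (T : V →ₛₗ[τ] V)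
    (he : ∀ i, T (e i) = e i) (X : Submodule F V) (hX : ∀ x ∈ X, T x ∈ X) :
    X ≤ Submodule.span F {x | x ∈ X ∧ T x = x} := by
  intro x hx
  induction hs : (e.repr x).support using Finset.strongInduction generalizing x with
  | H s ih =>
    subst hs
    by_cases! hmin : ∀ y ∈ X, (e.repr y).support ⊂ (e.repr x).support → y = 0
    · exact mem_span_fixed_of_support_minimal e T he hX hx hmin
    obtain ⟨y, hy, hyx, hy0⟩ := hmin
    obtain ⟨i, hi⟩ : ∃ i, e.repr y i ≠ 0 := Finsupp.ne_iff.mp (e.repr.map_ne_zero_iff.mpr hy0)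
    set a := e.repr x i / e.repr y i
    have hsupport : (e.repr (x - a • y)).support ⊂ (e.repr x).support := by
      refine (Finset.ssubset_iff_of_subset fun j hj ↦ ?_).mpr
        ⟨i, hyx.subset (by simpa using hi), by simp [a, hi]⟩
      contrapose! hj
      have hyj : j ∉ (e.repr y).support := fun h ↦ hj (hyx.subset h)
      simp_all
    simpa using add_mem (ih _ hsupport (X.sub_mem hx (X.smul_mem a hy)) rfl)
      (Submodule.smul_mem _ a (ih _ hyx hy rfl))

end Descent

section RationalSubspace

variable {K F m n : Type*} [Field K] [Semiring F] [Algebra K F] [Fintype m] [Fintype n]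

theorem exists_forall_mem_span_map_eq_sum (S : Submodule K (Matrix m n K)) :
    ∃ s : m → n → Matrix m n K, (∀ i j, s i j ∈ S) ∧
      ∀ u ∈ Submodule.span F ((fun c ↦ c.map (algebraMap K F)) '' (S : Set (Matrix m n K))),
        u = ∑ i, ∑ j, u i j • (s i j).map (algebraMap K F) := by
  classical
  -- The `s i j` are the images of the matrix units under a projection of `Matrix m n K` onto `S`.
  obtain ⟨p, hp⟩ := S.subtype.exists_leftInverse_of_injective S.ker_subtype
  refine ⟨fun i j ↦ p (single i j 1), fun i j ↦ (p _).2, fun u hu ↦ ?_⟩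
  induction hu using Submodule.span_induction with
  | mem u hu =>
    obtain ⟨c, hc, rfl⟩ := hu
    have hpc : (p c : Matrix m n K) = c := congrArg Subtype.val (LinearMap.congr_fun hp ⟨c, hc⟩)
    have hsum : c = ∑ i, ∑ j, c i j • (p (single i j 1) : Matrix m n K) := by
      conv_lhs => rw [← hpc, matrix_eq_sum_single c]
      simp only [map_sum, AddSubmonoidClass.coe_finsetSum]
      refine Finset.sum_congr rfl fun i _ ↦ Finset.sum_congr rfl fun j _ ↦ ?_
      rw [← S.coe_smul, ← map_smul, smul_single, smul_eq_mul, mul_one]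
    ext k l
    conv_lhs => rw [hsum]
    simp [Matrix.sum_apply, Algebra.smul_def]
  | zero => simp
  | add u v _ _ hu hv =>
    conv_lhs => rw [hu, hv]
    simp [add_smul, Finset.sum_add_distrib]
  | smul a u _ hu =>
    conv_lhs => rw [hu]
    simp [Finset.smul_sum, mul_smul]

end RationalSubspace

section Definitions

variable (K : Type*) {F : Type*} {n : Type u} [Field K] [Field F] [Algebra K F]

/-- The Picard-Vessiot ring `K[U, (det U)⁻¹]` inside `F`, for an arbitrary matrix `U` over `F`. -/
def picardVessiotRing [Fintype n] [DecidableEq n] (U : Matrix n n F) : Subalgebra K F :=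
  Algebra.adjoin K ((Set.range fun p : n × n ↦ U p.1 p.2) ∪ {U.det⁻¹})

/-- The Picard-Vessiot field `K(U)` inside `F`, for an arbitrary matrix `U` over `F`. -/
def picardVessiotField (U : Matrix n n F) : IntermediateField K F :=
  IntermediateField.adjoin K (Set.range fun p : n × n ↦ U p.1 p.2)

variable {K} in
/-- `U` is a fundamental solution matrix over `F` of the system `τ(Y) = AY` with `A` over `K`. -/
structure IsFundamentalMatrix [Fintype n] [DecidableEq n] (τ : F ≃+* F)
    (A : Matrix n n K) (U : Matrix n n F) : Prop where
  det_ne_zero : U.det ≠ 0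
  map_eq : U.map τ = A.map (algebraMap K F) * U

/-- The matrix coefficients of `U` over `K`: the `K`-linear combinations of the entries of `U`, with
coefficients given by a matrix `c` through the trace form `c ↦ tr(cU)`. -/
def matrixCoeff [Fintype n] (U : Matrix n n F) : Matrix n n K →ₗ[K] F where
  toFun c := (c.map (algebraMap K F) * U).trace
  map_add' c c' := by rw [Matrix.map_add _ (map_add _), add_mul, trace_add]
  map_smul' a c := by
    rw [Matrix.map_smul' _ _ _ (map_mul _), smul_mul, trace_smul, smul_eq_mul, RingHom.id_apply,
      Algebra.smul_def]

/-- `x` is difference-finite over `K`: it lies in a finite-dimensional `K`-subspace `W` of `F` with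
`τ(W) = W`. Within a Picard-Vessiot field this property characterises the elements of the
Picard-Vessiot ring. -/
def IsDifferenceFinite (τ : F ≃+* F) (x : F) : Prop :=
  ∃ W : Submodule K F, W.FG ∧ x ∈ W ∧ ∀ y, τ y ∈ W ↔ y ∈ W

end Definitions

section PicardVessiotRing

theorem det_mem_of_forall_mem {K A n : Type*} [CommRing K] [CommRing A] [Algebra K A] [Fintype n]
    [DecidableEq n] {R : Subalgebra K A} {U : Matrix n n A} (hU : ∀ i j, U i j ∈ R) :
    U.det ∈ R := by
  let U' : Matrix n n R := of fun i j ↦ ⟨U i j, hU i j⟩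
  have hdet : U.det = (U'.det : A) := (R.val.map_det U').symm
  exact hdet ▸ U'.det.2

variable {K F : Type*} {n : Type u} [Field K] [Field F] [Algebra K F] [Fintype n] [DecidableEq n]
  {U : Matrix n n F}

theorem apply_mem_picardVessiotRing (i j : n) : U i j ∈ picardVessiotRing K U :=
  Algebra.subset_adjoin (Or.inl ⟨(i, j), rfl⟩)

theorem det_inv_mem_picardVessiotRing : U.det⁻¹ ∈ picardVessiotRing K U :=
  Algebra.subset_adjoin (Or.inr rfl)

theorem picardVessiotRing_le_iff {R : Subalgebra K F} :
    picardVessiotRing K U ≤ R ↔ (∀ i j, U i j ∈ R) ∧ U.det⁻¹ ∈ R := by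
  simp [picardVessiotRing, Algebra.adjoin_le_iff, Set.insert_subset_iff, Set.range_subset_iff,
    and_comm]

theorem inv_apply_mem_picardVessiotRing (i j : n) : U⁻¹ i j ∈ picardVessiotRing K U := by
  let U' : Matrix n n (picardVessiotRing K U) :=
    of fun i j ↦ ⟨U i j, apply_mem_picardVessiotRing i j⟩
  have hadj : U.adjugate i j = (U'.adjugate i j : F) :=
    congrFun₂ ((picardVessiotRing K U).val.map_adjugate U').symm i j
  rw [inv_def, Ring.inverse_eq_inv', Matrix.smul_apply, smul_eq_mul, hadj]
  exact mul_mem det_inv_mem_picardVessiotRing (U'.adjugate i j).2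

theorem picardVessiotRing_le_picardVessiotField :
    picardVessiotRing K U ≤ (picardVessiotField K U).toSubalgebra := by
  have hU (i j : n) : U i j ∈ (picardVessiotField K U).toSubalgebra :=
    IntermediateField.subset_adjoin K _ ⟨(i, j), rfl⟩
  exact picardVessiotRing_le_iff.mpr
    ⟨hU, (picardVessiotField K U).inv_mem (det_mem_of_forall_mem hU)⟩

theorem mem_picardVessiotField_iff {x : F} : x ∈ picardVessiotField K U ↔
    ∃ r ∈ picardVessiotRing K U, ∃ s ∈ picardVessiotRing K U, x = r / s := by
  refine ⟨fun hx ↦ ?_, ?_⟩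
  · obtain ⟨r, hr, s, hs, rfl⟩ := IntermediateField.mem_adjoin_iff_div.mp hx
    have hle := Algebra.adjoin_mono (R := K)
      (Set.subset_union_left (s := Set.range fun p : n × n ↦ U p.1 p.2) (t := {U.det⁻¹}))
    exact ⟨r, hle hr, s, hle hs, rfl⟩
  · rintro ⟨r, hr, s, hs, rfl⟩
    exact div_mem (picardVessiotRing_le_picardVessiotField hr)
      (picardVessiotRing_le_picardVessiotField hs)

theorem exists_common_denominator {W : Submodule K F} (hW : W.FG)
    (hWL : ∀ w ∈ W, w ∈ picardVessiotField K U) :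
    ∃ b ∈ picardVessiotRing K U, b ≠ 0 ∧ ∀ w ∈ W, b * w ∈ picardVessiotRing K U := by
  classical
  obtain ⟨t, rfl⟩ := hW
  have hden (w : F) (hw : w ∈ t) :
      ∃ s ∈ picardVessiotRing K U, s ≠ 0 ∧ s * w ∈ picardVessiotRing K U := by
    obtain ⟨r, hr, s, hs, rfl⟩ := mem_picardVessiotField_iff.mp (hWL w (Submodule.subset_span hw))
    obtain rfl | hs0 := eq_or_ne s 0
    · exact ⟨1, one_mem _, one_ne_zero, by simp⟩
    · exact ⟨s, hs, hs0, by rwa [mul_div_cancel₀ _ hs0]⟩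
  choose! s hs hs0 hsw using hden
  refine ⟨∏ w ∈ t, s w, prod_mem hs, Finset.prod_ne_zero_iff.mpr hs0, fun w hw ↦ ?_⟩
  induction hw using Submodule.span_induction with
  | mem w hw =>
    rw [← Finset.prod_erase_mul t s hw, mul_assoc]
    exact mul_mem (prod_mem fun v hv ↦ hs v (Finset.mem_of_mem_erase hv)) (hsw w hw)
  | zero => simp
  | add v w _ _ hv hw => rw [mul_add]; exact add_mem hv hw
  | smul a w _ hw => rw [mul_smul_comm]; exact Subalgebra.smul_mem _ hw a

end PicardVessiotRing

section MatrixCoeff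

theorem kronecker_map {R S l m n p : Type*} [Semiring R] [Semiring S] (f : R →+* S)
    (c : Matrix l m R) (d : Matrix n p R) : (c ⊗ₖ d).map f = c.map f ⊗ₖ d.map f := by
  ext
  simp

variable {K F m n : Type*} [Field K] [Field F] [Algebra K F] [Fintype m] [Fintype n]
  {U : Matrix n n F} {V : Matrix m m F}

theorem matrixCoeff_mem {R : Subalgebra K F} (hU : ∀ i j, U i j ∈ R) (c : Matrix n n K) :
    matrixCoeff K U c ∈ R := by
  refine sum_mem fun i _ ↦ ?_
  rw [diag_apply, mul_apply]
  exact sum_mem fun j _ ↦ mul_mem (R.algebraMap_mem _) (hU j i)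

theorem matrixCoeff_fromBlocks (c : Matrix n n K) (d : Matrix m m K) :
    matrixCoeff K (fromBlocks U 0 0 V) (fromBlocks c 0 0 d) =
      matrixCoeff K U c + matrixCoeff K V d := by
  simp [matrixCoeff, fromBlocks_map, fromBlocks_multiply, Matrix.trace]

theorem matrixCoeff_kronecker (c : Matrix n n K) (d : Matrix m m K) :
    matrixCoeff K (U ⊗ₖ V) (c ⊗ₖ d) = matrixCoeff K U c * matrixCoeff K V d := by
  simp [matrixCoeff, kronecker_map, ← mul_kronecker_mul, trace_kronecker]

end MatrixCoeff

section Fundamental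

variable {K F : Type*} {m n : Type u} [Field K] [Field F] [Algebra K F]
  [Fintype m] [DecidableEq m] [Fintype n] [DecidableEq n]
  {τ : F ≃+* F} {A : Matrix n n K} {U : Matrix n n F} {B : Matrix m m K} {V : Matrix m m F}

namespace IsFundamentalMatrix

theorem map_det_eq (hU : IsFundamentalMatrix τ A U) :
    τ U.det = algebraMap K F A.det * U.det := by
  have hdet := congrArg det hU.map_eq
  rwa [det_mul, ← RingEquiv.mapMatrix_apply, ← RingEquiv.map_det, ← RingHom.mapMatrix_apply,
    ← RingHom.map_det] at hdet

theorem coeff_det_ne_zero (hU : IsFundamentalMatrix τ A U) : A.det ≠ 0 := by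
  intro hA
  have hdet := hU.map_det_eq
  simp [hA, hU.det_ne_zero] at hdet

protected theorem fromBlocks (hU : IsFundamentalMatrix τ A U) (hV : IsFundamentalMatrix τ B V) :
    IsFundamentalMatrix τ (fromBlocks A 0 0 B) (fromBlocks U 0 0 V) where
  det_ne_zero := by simp [hU.det_ne_zero, hV.det_ne_zero]
  map_eq := by simp [fromBlocks_map, fromBlocks_multiply, hU.map_eq, hV.map_eq]

protected theorem kronecker (hU : IsFundamentalMatrix τ A U) (hV : IsFundamentalMatrix τ B V) :
    IsFundamentalMatrix τ (A ⊗ₖ B) (U ⊗ₖ V) where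
  det_ne_zero := by simp [det_kronecker, hU.det_ne_zero, hV.det_ne_zero]
  map_eq := by
    simpa [kronecker_map, hU.map_eq, hV.map_eq, mul_kronecker_mul] using
      kronecker_map (τ : F →+* F) U V

protected theorem det_inv (hU : IsFundamentalMatrix τ A U) :
    IsFundamentalMatrix τ (of fun _ _ : PUnit.{u + 1} ↦ A.det⁻¹)
      (of fun _ _ : PUnit.{u + 1} ↦ U.det⁻¹) where
  det_ne_zero := by simpa using hU.det_ne_zero
  map_eq := by
    ext
    simp [mul_apply, hU.map_det_eq, mul_comm]

protected theorem one : IsFundamentalMatrix τ (1 : Matrix n n K) (1 : Matrix n n F) where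
  det_ne_zero := by simp
  map_eq := by simp

end IsFundamentalMatrix

theorem picardVessiotRing_fromBlocks_le {R : Subalgebra K F} (hU : picardVessiotRing K U ≤ R)
    (hV : picardVessiotRing K V ≤ R) : picardVessiotRing K (fromBlocks U 0 0 V) ≤ R := by
  rw [picardVessiotRing_le_iff] at hU hV ⊢
  refine ⟨?_, by simpa [mul_comm] using mul_mem hU.2 hV.2⟩
  rintro (i | i) (j | j) <;> simp [hU.1, hV.1]

theorem picardVessiotRing_kronecker_le {R : Subalgebra K F} (hU : picardVessiotRing K U ≤ R)
    (hV : picardVessiotRing K V ≤ R) : picardVessiotRing K (U ⊗ₖ V) ≤ R := by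
  rw [picardVessiotRing_le_iff] at hU hV ⊢
  refine ⟨fun i j ↦ mul_mem (hU.1 _ _) (hV.1 _ _), ?_⟩
  rw [det_kronecker, mul_inv, ← inv_pow, ← inv_pow]
  exact mul_mem (pow_mem hU.2 _) (pow_mem hV.2 _)

theorem IsFundamentalMatrix.exists_matrixCoeff_eq (hU : IsFundamentalMatrix τ A U) {x : F}
    (hx : x ∈ picardVessiotRing K U) :
    ∃ (m : Type u) (_ : Fintype m) (_ : DecidableEq m) (B : Matrix m m K) (V : Matrix m m F),
      IsFundamentalMatrix τ B V ∧ picardVessiotRing K V ≤ picardVessiotRing K U ∧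
        ∃ c, matrixCoeff K V c = x := by
  induction hx using Algebra.adjoin_induction with
  | mem x hx =>
    rcases hx with ⟨⟨i, j⟩, rfl⟩ | rfl
    · refine ⟨n, _, _, A, U, hU, le_rfl, single j i 1, ?_⟩
      simp [matrixCoeff, trace_single_mul]
    · refine ⟨PUnit, _, _, _, _, hU.det_inv, picardVessiotRing_le_iff.mpr ?_, 1, ?_⟩
      · simp [det_mem_of_forall_mem apply_mem_picardVessiotRing, det_inv_mem_picardVessiotRing]
      · simp [matrixCoeff, Matrix.trace]
  | algebraMap a =>
    refine ⟨PUnit, _, _, 1, 1, .one, picardVessiotRing_le_iff.mpr ?_, of fun _ _ ↦ a, ?_⟩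
    · simp [one_mem]
    · simp [matrixCoeff, Matrix.trace]
  | add x y _ _ hx hy =>
    obtain ⟨m, _, _, B, V, hV, hVU, c, rfl⟩ := hx
    obtain ⟨m', _, _, B', V', hV', hVU', c', rfl⟩ := hy
    exact ⟨m ⊕ m', _, _, _, _, hV.fromBlocks hV', picardVessiotRing_fromBlocks_le hVU hVU', _,
      matrixCoeff_fromBlocks c c'⟩
  | mul x y _ _ hx hy =>
    obtain ⟨m, _, _, B, V, hV, hVU, c, rfl⟩ := hx
    obtain ⟨m', _, _, B', V', hV', hVU', c', rfl⟩ := hy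
    exact ⟨m × m', _, _, _, _, hV.kronecker hV', picardVessiotRing_kronecker_le hVU hVU', _,
      matrixCoeff_kronecker c c'⟩

end Fundamental


section Invariance

variable {K F : Type*} {n : Type u} [Field K] [Field F] [Algebra K F] [Fintype n] [DecidableEq n]
  {σ : K ≃+* K} {τ : F ≃+* F} {A : Matrix n n K} {U : Matrix n n F}

namespace IsFundamentalMatrix

theorem map_matrixCoeff (hU : IsFundamentalMatrix τ A U)
    (hστ : Function.Semiconj (algebraMap K F) σ τ) (c : Matrix n n K) :
    τ (matrixCoeff K U c) = matrixCoeff K U (c.map σ * A) := by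
  have hc : (c.map (algebraMap K F)).map τ = (c.map σ).map (algebraMap K F) := by
    ext i j
    exact (hστ (c i j)).symm
  calc τ (c.map (algebraMap K F) * U).trace
      = ((c.map (algebraMap K F) * U).map τ).trace := AddMonoidHom.map_trace τ _
    _ = ((c.map σ * A).map (algebraMap K F) * U).trace := by
      rw [Matrix.map_mul, Matrix.map_mul, hc, hU.map_eq, Matrix.mul_assoc]

theorem map_mem_range_matrixCoeff_iff (hU : IsFundamentalMatrix τ A U)
    (hστ : Function.Semiconj (algebraMap K F) σ τ) (y : F) :
    τ y ∈ LinearMap.range (matrixCoeff K U) ↔ y ∈ LinearMap.range (matrixCoeff K U) := by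
  refine ⟨fun ⟨d, hd⟩ ↦ ⟨(d * A⁻¹).map σ.symm, τ.injective ?_⟩, ?_⟩
  · have hinv : ((d * A⁻¹).map σ.symm).map σ = d * A⁻¹ := by
      ext i j
      exact σ.apply_symm_apply _
    rw [hU.map_matrixCoeff hστ, hinv,
      nonsing_inv_mul_cancel_right A d hU.coeff_det_ne_zero.isUnit, hd]
  · rintro ⟨c, rfl⟩
    exact ⟨_, (hU.map_matrixCoeff hστ c).symm⟩

theorem exists_fg_invariant (hU : IsFundamentalMatrix τ A U)
    (hστ : Function.Semiconj (algebraMap K F) σ τ) {x : F} (hx : x ∈ picardVessiotRing K U) :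
    ∃ W : Submodule K F, W.FG ∧ x ∈ W ∧ (∀ y, τ y ∈ W ↔ y ∈ W) ∧
      ∀ y ∈ W, y ∈ picardVessiotRing K U := by
  obtain ⟨m, _, _, B, V, hV, hVU, c, rfl⟩ := hU.exists_matrixCoeff_eq hx
  refine ⟨LinearMap.range (matrixCoeff K V), Module.Finite.iff_fg.mp inferInstance, ⟨c, rfl⟩,
    hV.map_mem_range_matrixCoeff_iff hστ, ?_⟩
  rintro _ ⟨d, rfl⟩
  exact matrixCoeff_mem (picardVessiotRing_le_iff.mp hVU).1 d

theorem map_mem_picardVessiotRing_iff (hU : IsFundamentalMatrix τ A U)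
    (hστ : Function.Semiconj (algebraMap K F) σ τ) {x : F} :
    τ x ∈ picardVessiotRing K U ↔ x ∈ picardVessiotRing K U := by
  refine ⟨fun hx ↦ ?_, fun hx ↦ ?_⟩ <;>
    obtain ⟨W, -, hxW, hW, hWU⟩ := hU.exists_fg_invariant hστ hx
  · exact hWU x ((hW x).mp hxW)
  · exact hWU (τ x) ((hW x).mpr hxW)

theorem map_mem_picardVessiotField_iff (hU : IsFundamentalMatrix τ A U)
    (hστ : Function.Semiconj (algebraMap K F) σ τ) {x : F} :
    τ x ∈ picardVessiotField K U ↔ x ∈ picardVessiotField K U := by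
  have hring {r : F} := hU.map_mem_picardVessiotRing_iff hστ (x := r)
  simp only [mem_picardVessiotField_iff]
  refine ⟨?_, ?_⟩
  · rintro ⟨r, hr, s, hs, hx⟩
    refine ⟨τ.symm r, hring.mp (by simpa), τ.symm s, hring.mp (by simpa), τ.injective ?_⟩
    simpa using hx
  · rintro ⟨r, hr, s, hs, rfl⟩
    exact ⟨τ r, hring.mpr hr, τ s, hring.mpr hs, map_div₀ τ r s⟩

end IsFundamentalMatrix

end Invariance

section Simplicity

variable {K F : Type*} {n : Type u} [Field K] [Field F] [Algebra K F] [Fintype n]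

/-- The `F`-span of the matrices `c` over `K` whose matrix coefficient `tr(cU)` lies in `J`. Descent
applies to its translate by `U`, which is `τ`-stable when `J` is. -/
def coeffSpan (U : Matrix n n F) (J : Submodule K F) : Submodule F (Matrix n n F) :=
  Submodule.span F
    ((fun c ↦ c.map (algebraMap K F)) '' (J.comap (matrixCoeff K U) : Set (Matrix n n K)))

theorem trace_mul_mem_of_mem_coeffSpan {R : Subalgebra K F} {I : Submodule R F}
    {U u : Matrix n n F} (hu : u ∈ coeffSpan U (I.restrictScalars K)) (huR : ∀ i j, u i j ∈ R) :
    (u * U).trace ∈ I := by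
  obtain ⟨s, hs, hsum⟩ := exists_forall_mem_span_map_eq_sum (F := F)
    ((I.restrictScalars K).comap (matrixCoeff K U))
  have htrace : (u * U).trace = ∑ i, ∑ j, u i j * matrixCoeff K U (s i j) := by
    conv_lhs => rw [hsum u hu]
    simp [Finset.sum_mul, trace_sum, matrixCoeff]
  rw [htrace]
  exact sum_mem fun i _ ↦ sum_mem fun j _ ↦ I.smul_mem ⟨u i j, huR i j⟩ (hs i j)

variable [DecidableEq n] {σ : K ≃+* K} {τ : F ≃+* F} {A : Matrix n n K} {U : Matrix n n F}

namespace IsFundamentalMatrix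

theorem map_mul_mem_coeffSpan (hU : IsFundamentalMatrix τ A U)
    (hστ : Function.Semiconj (algebraMap K F) σ τ) {J : Submodule K F} (hJ : ∀ x ∈ J, τ x ∈ J)
    {u : Matrix n n F} (hu : u ∈ coeffSpan U J) :
    u.map τ * A.map (algebraMap K F) ∈ coeffSpan U J := by
  induction hu using Submodule.span_induction with
  | mem u hu =>
    obtain ⟨c, hc, rfl⟩ := hu
    refine Submodule.subset_span ⟨c.map σ * A, ?_, ?_⟩
    · simpa [← hU.map_matrixCoeff hστ] using hJ _ hc
    · ext i j
      simp [mul_apply, hστ.eq]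
  | zero => simp
  | add u v _ _ hu hv =>
    rw [Matrix.map_add _ (map_add τ), add_mul]
    exact add_mem hu hv
  | smul a u _ hu =>
    rw [Matrix.map_smul' _ _ _ (map_mul τ), smul_mul]
    exact Submodule.smul_mem _ _ hu

theorem exists_fixed_trace_ne_zero (hU : IsFundamentalMatrix τ A U)
    (hστ : Function.Semiconj (algebraMap K F) σ τ) {J : Submodule K F} (hJ : ∀ x ∈ J, τ x ∈ J)
    {c : Matrix n n K} (hc : matrixCoeff K U c ∈ J) (hc0 : matrixCoeff K U c ≠ 0) :
    ∃ u ∈ coeffSpan U J, (u * U).map τ = u * U ∧ (u * U).trace ≠ 0 := by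
  let T := LinearMap.mapMatrix (m := n) (n := n) (τ : F →+* F).toSemilinearMap
  let X := (coeffSpan U J).map (LinearMap.mulRight F U)
  have hfix : ∀ p, T (stdBasis F n n p) = stdBasis F n n p := by
    rintro ⟨i, j⟩
    simp [T, stdBasis_eq_single]
  have hX : ∀ x ∈ X, T x ∈ X := by
    rintro _ ⟨u, hu, rfl⟩
    refine ⟨_, hU.map_mul_mem_coeffSpan hστ hJ hu, ?_⟩
    simp [T, Matrix.map_mul, hU.map_eq, Matrix.mul_assoc]
  by_contra! htrace
  have hker : X ≤ LinearMap.ker (traceLinearMap n F F) := by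
    refine (le_span_fixed_of_stable (stdBasis F n n) T hfix X hX).trans (Submodule.span_le.mpr ?_)
    rintro _ ⟨⟨u, hu, rfl⟩, hfixed⟩
    exact htrace u hu hfixed
  exact hc0 (hker ⟨_, Submodule.subset_span ⟨c, hc, rfl⟩, rfl⟩)

theorem one_mem_of_matrixCoeff_mem (hU : IsFundamentalMatrix τ A U)
    (hστ : Function.Semiconj (algebraMap K F) σ τ)
    (hconst : ∀ x, τ x = x → x ∈ Set.range (algebraMap K F)) {R : Subalgebra K F}
    (hUR : picardVessiotRing K U ≤ R) {I : Submodule R F} (hI : ∀ x ∈ I, τ x ∈ I)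
    {c : Matrix n n K} (hc : matrixCoeff K U c ∈ I) (hc0 : matrixCoeff K U c ≠ 0) : 1 ∈ I := by
  obtain ⟨u, hu, hfixed, htrace⟩ :=
    hU.exists_fixed_trace_ne_zero hστ (J := I.restrictScalars K) hI hc hc0
  choose x hx using fun i j ↦ hconst _ (congrFun₂ hfixed i j)
  have huR (i j : n) : u i j ∈ R := by
    rw [← mul_nonsing_inv_cancel_right U u hU.det_ne_zero.isUnit, mul_apply]
    exact sum_mem fun l _ ↦ mul_mem (hx i l ▸ R.algebraMap_mem _)
      (hUR (inv_apply_mem_picardVessiotRing l j))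
  have htraceK : (u * U).trace = algebraMap K F (∑ i, x i i) := by
    simp [Matrix.trace, hx]
  have hmem := (I.restrictScalars K).smul_mem (∑ i, x i i)⁻¹
    (trace_mul_mem_of_mem_coeffSpan hu huR)
  rwa [Algebra.smul_def, map_inv₀, ← htraceK, inv_mul_cancel₀ htrace] at hmem

theorem one_mem_of_stable (hU : IsFundamentalMatrix τ A U)
    (hστ : Function.Semiconj (algebraMap K F) σ τ)
    (hconst : ∀ x, τ x = x → x ∈ Set.range (algebraMap K F))
    {I : Submodule (picardVessiotRing K U) F} (hI : ∀ x ∈ I, τ x ∈ I) {b : F}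
    (hbU : b ∈ picardVessiotRing K U) (hbI : b ∈ I) (hb0 : b ≠ 0) : 1 ∈ I := by
  obtain ⟨m, _, _, B, V, hV, hVU, c, rfl⟩ := hU.exists_matrixCoeff_eq hbU
  exact hV.one_mem_of_matrixCoeff_mem hστ hconst hVU hI hbI hb0

end IsFundamentalMatrix

end Simplicity

section Characterisation

/-- The common denominators of `W` with respect to `R`, i.e. the elements `r` with `rW ⊆ R`. They
need not lie in `R`, so they form an `R`-submodule of the ambient algebra instead of an ideal. -/
def denominatorModule {K A : Type*} [CommRing K] [CommRing A] [Algebra K A] (R : Subalgebra K A)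
    (W : Submodule K A) : Submodule R A where
  carrier := {r | ∀ w ∈ W, r * w ∈ R}
  add_mem' hr hs w hw := by rw [add_mul]; exact add_mem (hr w hw) (hs w hw)
  zero_mem' w _ := by simp
  smul_mem' a r hr w hw := by
    rw [Subalgebra.smul_def, smul_eq_mul, mul_assoc]
    exact mul_mem a.2 (hr w hw)

variable {K F : Type*} {n : Type u} [Field K] [Field F] [Algebra K F] [Fintype n] [DecidableEq n]
  {σ : K ≃+* K} {τ : F ≃+* F} {A : Matrix n n K} {U : Matrix n n F}

namespace IsFundamentalMatrix

theorem map_mem_denominatorModule (hU : IsFundamentalMatrix τ A U)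
    (hστ : Function.Semiconj (algebraMap K F) σ τ) {W : Submodule K F}
    (hW : ∀ y, τ y ∈ W ↔ y ∈ W) {r : F} (hr : r ∈ denominatorModule (picardVessiotRing K U) W) :
    τ r ∈ denominatorModule (picardVessiotRing K U) W := by
  intro w hw
  obtain ⟨w, rfl⟩ := τ.surjective w
  rw [← map_mul, hU.map_mem_picardVessiotRing_iff hστ]
  exact hr w ((hW w).mp hw)

theorem mem_picardVessiotRing_of_fg_invariant (hU : IsFundamentalMatrix τ A U)
    (hστ : Function.Semiconj (algebraMap K F) σ τ)
    (hconst : ∀ x, τ x = x → x ∈ Set.range (algebraMap K F)) {W : Submodule K F} (hfg : W.FG)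
    (hW : ∀ y, τ y ∈ W ↔ y ∈ W) (hWU : ∀ w ∈ W, w ∈ picardVessiotField K U) {x : F}
    (hx : x ∈ W) : x ∈ picardVessiotRing K U := by
  obtain ⟨b, hb, hb0, hbW⟩ := exists_common_denominator hfg hWU
  have hone : 1 ∈ denominatorModule (picardVessiotRing K U) W :=
    hU.one_mem_of_stable hστ hconst (fun _ ↦ hU.map_mem_denominatorModule hστ hW) hb hbW hb0
  simpa using hone x hx

theorem mem_picardVessiotRing_iff (hU : IsFundamentalMatrix τ A U)
    (hστ : Function.Semiconj (algebraMap K F) σ τ)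
    (hconst : ∀ x, τ x = x → x ∈ Set.range (algebraMap K F)) {x : F} :
    x ∈ picardVessiotRing K U ↔ x ∈ picardVessiotField K U ∧ IsDifferenceFinite K τ x := by
  refine ⟨fun hx ↦ ⟨picardVessiotRing_le_picardVessiotField hx, ?_⟩, ?_⟩
  · obtain ⟨W, hfg, hxW, hW, -⟩ := hU.exists_fg_invariant hστ hx
    exact ⟨W, hfg, hxW, hW⟩
  · rintro ⟨hxU, W, hfg, hxW, hW⟩
    let W' := W ⊓ (picardVessiotField K U).toSubalgebra.toSubmodule
    have hfg' : W'.FG := Submodule.FG.of_le hfg inf_le_left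
    exact hU.mem_picardVessiotRing_of_fg_invariant hστ hconst hfg'
      (fun y ↦ and_congr (hW y) (hU.map_mem_picardVessiotField_iff hστ)) (fun w hw ↦ hw.2)
      ⟨hxW, hxU⟩

end IsFundamentalMatrix

end Characterisation

section SubfieldClosure

variable {F : Type*} [Field F] (K : Subfield F) {n : Type*}

theorem closure_union_range_eq_picardVessiotField (U : Matrix n n F) :
    Subfield.closure ((K : Set F) ∪ Set.range fun p : n × n ↦ U p.1 p.2) =
      (picardVessiotField K U).toSubfield := by
  rw [picardVessiotField, IntermediateField.adjoin_toSubfield]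
  congr
  exact Subtype.range_coe.symm

end SubfieldClosure

/-- If `M` is an intermediate field of the Picard-Vessiot extension `L/K` which is itself a
Picard-Vessiot field over `K`, with Picard-Vessiot ring `R_M`, then `R_M = M ∩ R`. -/
theorem picardVessiot_ring_of_intermediate_field
    (F : Type*) [Field F] (τ : F ≃+* F)
    (k : Subfield F) (hk : ∀ a : F, a ∈ k ↔ τ a = a)
    (K : Subfield F) (hkK : (k : Set F) ⊆ (K : Set F)) (hτK : ∀ a : F, a ∈ K ↔ τ a ∈ K)
    -- the ambient Picard-Vessiot data
    (d : ℕ) (A U : Matrix (Fin d) (Fin d) F)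
    (hA : ∀ i j, A i j ∈ K) (hAdet : A.det ≠ 0) (hUdet : U.det ≠ 0)
    (hU : U.map τ = A * U)
    (R : Subalgebra K F)
    (hR : R = Algebra.adjoin K
      ((Set.range fun p : Fin d × Fin d => U p.1 p.2) ∪ {(U.det)⁻¹}))
    (L : Subfield F)
    (hL : L = Subfield.closure ((K : Set F) ∪ Set.range fun p : Fin d × Fin d => U p.1 p.2))
    -- the intermediate Picard-Vessiot data
    (e : ℕ) (B V : Matrix (Fin e) (Fin e) F)
    (hB : ∀ i j, B i j ∈ K) (hBdet : B.det ≠ 0) (hVdet : V.det ≠ 0)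
    (hV : V.map τ = B * V)
    (M : Subfield F)
    (hM : M = Subfield.closure ((K : Set F) ∪ Set.range fun p : Fin e × Fin e => V p.1 p.2))
    (hML : M ≤ L)
    (RM : Subalgebra K F)
    (hRM : RM = Algebra.adjoin K
      ((Set.range fun p : Fin e × Fin e => V p.1 p.2) ∪ {(V.det)⁻¹})) :
    (RM : Set F) = (M : Set F) ∩ (R : Set F) := by
  let σ : K ≃+* K := RingEquiv.restrict τ K K hτK
  have hστ : Function.Semiconj (algebraMap K F) σ τ := fun _ ↦ rfl
  have hconst (x : F) (hx : τ x = x) : x ∈ Set.range (algebraMap K F) :=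
    ⟨⟨x, hkK ((hk x).mpr hx)⟩, rfl⟩
  have hUfund : IsFundamentalMatrix τ (of fun i j ↦ (⟨A i j, hA i j⟩ : K)) U := ⟨hUdet, hU⟩
  have hVfund : IsFundamentalMatrix τ (of fun i j ↦ (⟨B i j, hB i j⟩ : K)) V := ⟨hVdet, hV⟩
  rw [closure_union_range_eq_picardVessiotField] at hL hM
  subst hR hL hM hRM
  ext x
  have hxR : x ∈ picardVessiotRing K U ↔ _ := hUfund.mem_picardVessiotRing_iff hστ hconst
  have hxRM : x ∈ picardVessiotRing K V ↔ _ := hVfund.mem_picardVessiotRing_iff hστ hconst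
  have hxML : x ∈ picardVessiotField K V → x ∈ picardVessiotField K U := @hML x
  change x ∈ picardVessiotRing K V ↔ x ∈ picardVessiotField K V ∧ x ∈ picardVessiotRing K U
  rw [hxR, hxRM]
  exact ⟨fun h ↦ ⟨h.1, hxML h.1, h.2⟩, fun h ↦ ⟨h.1, h.2.2⟩⟩
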